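/- arXiv:1611.09814 — 3 statements merged into one kernel-verified Lean document; each statement's English description precedes it below -/
import Mathlib

section
/- Let P be a symmetric positive definite n×n real matrix, let Y = P⁻¹, let A be an n×n real matrix, B an n×m real matrix, K an m×n real matrix, and set K_a = K Y. Then (A + BK)ᵀ P + P (A + BK) is negative definite if and only if A Y + Y Aᵀ + B K_a + K_aᵀ Bᵀ is negative definite. -/
/-!
Congruence by an invertible matrix preserves negative definiteness. For `F = A + B * K` and a
symmetric `Y = P⁻¹`, congruence by `Y` cancels `P` from both summands of `Fᵀ * P + P * F`, leaving
`Y * Fᵀ + F * Y`, in which the gain `K` occurs only through the product `K * Y`.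
-/

open Matrix

section

variable {ι κ R : Type*} [Fintype ι] [Fintype κ] [CommRing R]

/-- Negative definiteness of a square matrix: the sense in which a matrix inequality `M < 0` is
read. Unlike in `Matrix.PosDef`, the matrix is not required to be symmetric. -/
def IsNegDef [LT R] (M : Matrix ι ι R) : Prop :=
  ∀ v : ι → R, v ≠ 0 → v ⬝ᵥ M *ᵥ v < 0

lemma dotProduct_transpose_mul_mul_mulVec (S : Matrix ι κ R) (M : Matrix ι ι R) (v : κ → R) :
    v ⬝ᵥ (Sᵀ * M * S) *ᵥ v = (S *ᵥ v) ⬝ᵥ M *ᵥ (S *ᵥ v) := by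
  rw [← mulVec_mulVec, ← mulVec_mulVec, dotProduct_mulVec, vecMul_transpose]

lemma closedLoop_mul_add_mul_transpose {Y : Matrix ι ι R} (hY : Y.IsSymm) (A : Matrix ι ι R)
    (B : Matrix ι κ R) (K : Matrix κ ι R) :
    (A + B * K) * Y + Y * (A + B * K)ᵀ =
      A * Y + Y * Aᵀ + B * (K * Y) + (K * Y)ᵀ * Bᵀ := by
  simp only [transpose_add, transpose_mul, hY.eq, Matrix.add_mul, Matrix.mul_add,
    Matrix.mul_assoc]
  abel

variable [DecidableEq ι]

lemma isNegDef_transpose_mul_mul_iff [LT R] {S : Matrix ι ι R} (hS : IsUnit S)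
    (M : Matrix ι ι R) : IsNegDef (Sᵀ * M * S) ↔ IsNegDef M := by
  have mulVec_eq_zero (v : ι → R) : S *ᵥ v = 0 ↔ v = 0 :=
    (mulVec_injective_of_isUnit hS).eq_iff' (mulVec_zero S)
  calc IsNegDef (Sᵀ * M * S)
      ↔ ∀ v, S *ᵥ v ≠ 0 → (S *ᵥ v) ⬝ᵥ M *ᵥ (S *ᵥ v) < 0 := by
        simp only [IsNegDef, dotProduct_transpose_mul_mul_mulVec, ne_eq, mulVec_eq_zero]
    _ ↔ IsNegDef M :=
        ((mulVec_surjective_iff_isUnit.mpr hS).forall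
          (p := fun w => w ≠ 0 → w ⬝ᵥ M *ᵥ w < 0)).symm

lemma inv_transpose_mul_lyapunov_mul_inv {P : Matrix ι ι R} (hPsymm : P.IsSymm)
    (hP : IsUnit P) (F : Matrix ι ι R) :
    P⁻¹ᵀ * (Fᵀ * P + P * F) * P⁻¹ = F * P⁻¹ + P⁻¹ * Fᵀ := by
  have hdet : IsUnit P.det := (isUnit_iff_isUnit_det P).mp hP
  calc P⁻¹ᵀ * (Fᵀ * P + P * F) * P⁻¹
      = P⁻¹ * (Fᵀ * P + P * F) * P⁻¹ := by rw [transpose_nonsing_inv, hPsymm.eq]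
    _ = (P⁻¹ * P) * (F * P⁻¹) + P⁻¹ * Fᵀ * (P * P⁻¹) := by noncomm_ring
    _ = F * P⁻¹ + P⁻¹ * Fᵀ := by
      rw [nonsing_inv_mul P hdet, mul_nonsing_inv P hdet, Matrix.one_mul, Matrix.mul_one]

lemma isNegDef_lyapunov_iff_inv [LT R] {P : Matrix ι ι R} (hPsymm : P.IsSymm)
    (hP : IsUnit P) (F : Matrix ι ι R) :
    IsNegDef (Fᵀ * P + P * F) ↔ IsNegDef (F * P⁻¹ + P⁻¹ * Fᵀ) := by
  rw [← inv_transpose_mul_lyapunov_mul_inv hPsymm hP,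
    isNegDef_transpose_mul_mul_iff (isUnit_nonsing_inv_iff.mpr hP)]

theorem bmi_iff_lmi_general [LT R] {P : Matrix ι ι R} (hPsymm : P.IsSymm) (hP : IsUnit P)
    (A : Matrix ι ι R) (B : Matrix ι κ R) (K : Matrix κ ι R)
    {Y : Matrix ι ι R} (hY : Y = P⁻¹) {Ka : Matrix κ ι R} (hKa : Ka = K * Y) :
    IsNegDef ((A + B * K)ᵀ * P + P * (A + B * K)) ↔
      IsNegDef (A * Y + Y * Aᵀ + B * Ka + Kaᵀ * Bᵀ) := by
  have hYsymm : Y.IsSymm := hY ▸ hPsymm.inv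
  rw [isNegDef_lyapunov_iff_inv hPsymm hP, ← hY, closedLoop_mul_add_mul_transpose hYsymm, ← hKa]

end

/-- Paper's Theorem 5: the BMI `(A + BK)ᵀ P + P (A + BK) < 0` is equivalent, via
congruence by `Y = P⁻¹` and the substitution `K_a = K Y`, to the LMI
`A Y + Y Aᵀ + B K_a + K_aᵀ Bᵀ < 0`. -/
theorem bmi_iff_lmi {n m : ℕ}
    (P : Matrix (Fin n) (Fin n) ℝ)
    (hPsymm : Pᵀ = P)
    (hPpos : ∀ v : Fin n → ℝ, v ≠ 0 → 0 < v ⬝ᵥ P.mulVec v)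
    (A : Matrix (Fin n) (Fin n) ℝ) (B : Matrix (Fin n) (Fin m) ℝ)
    (K : Matrix (Fin m) (Fin n) ℝ)
    (Y : Matrix (Fin n) (Fin n) ℝ) (hY : Y = P⁻¹)
    (Ka : Matrix (Fin m) (Fin n) ℝ) (hKa : Ka = K * Y) :
    (∀ v : Fin n → ℝ, v ≠ 0 →
        v ⬝ᵥ ((A + B * K)ᵀ * P + P * (A + B * K)).mulVec v < 0) ↔
    (∀ v : Fin n → ℝ, v ≠ 0 →
        v ⬝ᵥ (A * Y + Y * Aᵀ + B * Ka + Kaᵀ * Bᵀ).mulVec v < 0) := by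
  have hP : P.PosDef := .of_dotProduct_mulVec_pos hPsymm hPpos
  exact bmi_iff_lmi_general hPsymm hP.isUnit A B K hY hKa
end

section
/- Let P be a symmetric positive definite n×n real matrix, B an n×m real matrix, K an m×n real matrix, and A₁, …, A_N n×n real matrices such that (Aᵢ + BK)ᵀ P + P (Aᵢ + BK) is negative definite for every i ∈ {1, …, N}. Let A : ℝ → (n×n real matrices) be any function such that A(t) belongs to the convex hull of {A₁, …, A_N} for every t ≥ 0, and let x : ℝ → ℝⁿ satisfy, for every t ≥ 0, x′(t) = (A(t) + BK) x(t). Then x(t) → 0 as t → +∞. -/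
open Matrix

/-!
The function `V v = vᵀ P v` decreases along every admissible trajectory at a rate which compactness
makes uniform: homogeneity reduces `-V' ≥ a V` to the unit sphere, where finitely many vertices (or
a compact set of them) leave a common `a > 0`. For fixed `v` the derivative of `V` in the direction
`F v` is linear in `F`, so the inequality passes from the vertices to their convex hull. Grönwall's
inequality then gives `V (x t) ≤ exp (-a t) V (x 0)`, and `V` is comparable to `‖·‖²`.
-/

open Filter Set Topology
open scoped Pointwise

lemma exists_pos_mul_le_of_homogeneous {X E : Type*} [TopologicalSpace X] [NormedAddCommGroup E]
    [NormedSpace ℝ E] [ProperSpace E] {S : Set X} (hS : IsCompact S) {k : ℕ} (hk : k ≠ 0)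
    {p : E → ℝ} {q : X → E → ℝ} (hp : Continuous p) (hq : Continuous (Function.uncurry q))
    (hp_smul : ∀ (r : ℝ) v, p (r • v) = r ^ k * p v)
    (hq_smul : ∀ s (r : ℝ) v, q s (r • v) = r ^ k * q s v)
    (hq_pos : ∀ s ∈ S, ∀ v ≠ 0, 0 < q s v) :
    ∃ a > 0, ∀ s ∈ S, ∀ v, a * p v ≤ q s v := by
  have ratio_continuousOn : ContinuousOn (fun z : X × E => p z.2 / q z.1 z.2)
      (S ×ˢ Metric.sphere 0 1) :=
    (hp.comp continuous_snd).continuousOn.div hq.continuousOn fun z hz =>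
      (hq_pos z.1 hz.1 z.2 (ne_zero_of_mem_unit_sphere ⟨z.2, hz.2⟩)).ne'
  obtain ⟨D, hD⟩ := (hS.prod (isCompact_sphere 0 1)).bddAbove_image ratio_continuousOn
  have hD_pos : 0 < |D| + 1 := by positivity
  refine ⟨(|D| + 1)⁻¹, inv_pos.2 hD_pos, fun s hs v => ?_⟩
  rw [inv_mul_le_iff₀ hD_pos]
  obtain rfl | hv := eq_or_ne v 0
  · have p_zero : p 0 = 0 := by simpa [hk] using hp_smul 0 0
    have q_zero : q s 0 = 0 := by simpa [hk] using hq_smul s 0 0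
    rw [p_zero, q_zero, mul_zero]
  · have hv_norm : 0 < ‖v‖ := norm_pos_iff.2 hv
    have unit_mem : ‖v‖⁻¹ • v ∈ Metric.sphere (0 : E) 1 := by simp [norm_smul, hv_norm.ne']
    have ratio_le : p v / q s v ≤ D := by
      have h := hD (mem_image_of_mem _ (mk_mem_prod hs unit_mem))
      simp only [hp_smul, hq_smul] at h
      rwa [mul_div_mul_left _ _ (by positivity)] at h
    rw [← div_le_iff₀ (hq_pos s hs v hv)]
    linarith [le_abs_self D]

lemma le_mul_exp_of_hasDerivWithinAt_le {f f' : ℝ → ℝ} {K t₀ : ℝ}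
    (hf : ∀ t, t₀ ≤ t → HasDerivWithinAt f (f' t) (Ici t₀) t)
    (hf' : ∀ t, t₀ ≤ t → f' t ≤ K * f t) {t : ℝ} (ht : t₀ ≤ t) :
    f t ≤ f t₀ * Real.exp (K * (t - t₀)) := by
  rw [← gronwallBound_ε0]
  refine le_gronwallBound_of_liminf_deriv_right_le (f' := f')
    (fun s hs => (hf s hs.1).continuousWithinAt.mono Icc_subset_Ici_self)
    (fun s hs r hr => ?_) le_rfl (fun s hs => ?_) t (right_mem_Icc.2 ht)
  · exact ((hf s hs.1).mono (Ici_subset_Ici.2 hs.1)).liminf_right_slope_le hr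
  · simpa using hf' s hs.1

section LyapunovForm

variable {ι : Type*} [Fintype ι]

lemma smul_dotProduct_mulVec_smul (M : Matrix ι ι ℝ) (r : ℝ) (v : ι → ℝ) :
    (r • v) ⬝ᵥ M *ᵥ (r • v) = r ^ 2 * (v ⬝ᵥ M *ᵥ v) := by
  rw [mulVec_smul, dotProduct_smul, smul_dotProduct, smul_smul, smul_eq_mul, sq]

/-- The quadratic form of the Lyapunov matrix `Fᵀ P + P F`: the derivative of `v ↦ vᵀ P v` along
the linear vector field `v ↦ F v`. -/
def lyapunovForm (P F : Matrix ι ι ℝ) (v : ι → ℝ) : ℝ :=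
  v ⬝ᵥ (Fᵀ * P + P * F) *ᵥ v

lemma lyapunovForm_eq (P F : Matrix ι ι ℝ) (v : ι → ℝ) :
    lyapunovForm P F v = (F *ᵥ v) ⬝ᵥ P *ᵥ v + v ⬝ᵥ P *ᵥ (F *ᵥ v) := by
  rw [lyapunovForm, add_mulVec, dotProduct_add, ← mulVec_mulVec, ← mulVec_mulVec,
    dotProduct_mulVec v Fᵀ, vecMul_transpose]

lemma isLinearMap_lyapunovForm (P : Matrix ι ι ℝ) (v : ι → ℝ) :
    IsLinearMap ℝ fun F => lyapunovForm P F v where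
  map_add F G := by
    simp only [lyapunovForm_eq, add_mulVec, add_dotProduct, mulVec_add, dotProduct_add]
    ring
  map_smul r F := by
    simp only [lyapunovForm_eq, smul_mulVec, smul_dotProduct, mulVec_smul, dotProduct_smul,
      smul_add]

lemma lyapunovForm_le_of_mem_convexHull {P F : Matrix ι ι ℝ} {S : Set (Matrix ι ι ℝ)}
    {v : ι → ℝ} {r : ℝ} (hS : ∀ G ∈ S, lyapunovForm P G v ≤ r) (hF : F ∈ convexHull ℝ S) :
    lyapunovForm P F v ≤ r :=
  convexHull_min hS (convex_halfSpace_le (isLinearMap_lyapunovForm P v) r) hF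

lemma hasDerivWithinAt_dotProduct_mulVec {P F : Matrix ι ι ℝ} {x : ℝ → ι → ℝ} {s : Set ℝ} {t : ℝ}
    (hx : HasDerivWithinAt x (F *ᵥ x t) s t) :
    HasDerivWithinAt (fun τ => x τ ⬝ᵥ P *ᵥ x τ) (lyapunovForm P F (x t)) s t := by
  have hx_apply := hasDerivWithinAt_pi.1 hx
  rw [lyapunovForm_eq]
  simp only [dotProduct, ← Finset.sum_add_distrib]
  exact HasDerivWithinAt.fun_sum fun i _ =>
    (hx_apply i).mul (HasDerivWithinAt.fun_sum fun j _ => (hx_apply j).const_mul (P i j))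

variable {P : Matrix ι ι ℝ} {S : Set (Matrix ι ι ℝ)}

lemma exists_norm_sq_le_dotProduct_mulVec_le (hP : ∀ v ≠ 0, 0 < v ⬝ᵥ P *ᵥ v) :
    ∃ c > 0, ∃ C > 0, ∀ v, c * ‖v‖ ^ 2 ≤ v ⬝ᵥ P *ᵥ v ∧ v ⬝ᵥ P *ᵥ v ≤ C * ‖v‖ ^ 2 := by
  have norm_sq_smul (r : ℝ) (v : ι → ℝ) : ‖r • v‖ ^ 2 = r ^ 2 * ‖v‖ ^ 2 := by
    rw [norm_smul, mul_pow, Real.norm_eq_abs, sq_abs]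
  obtain ⟨c, hc, lower⟩ := exists_pos_mul_le_of_homogeneous (isCompact_singleton (x := P))
    two_ne_zero (p := fun v => ‖v‖ ^ 2) (q := fun M v => v ⬝ᵥ M *ᵥ v) (by fun_prop)
    (by unfold Function.uncurry; fun_prop) norm_sq_smul smul_dotProduct_mulVec_smul
    (by simpa using hP)
  obtain ⟨d, hd, upper⟩ := exists_pos_mul_le_of_homogeneous (isCompact_singleton (x := P))
    two_ne_zero (p := fun v => v ⬝ᵥ P *ᵥ v) (q := fun _ v => ‖v‖ ^ 2) (by fun_prop)
    (by unfold Function.uncurry; fun_prop) (smul_dotProduct_mulVec_smul P) (fun _ => norm_sq_smul)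
    (fun _ _ v hv => by positivity)
  exact ⟨c, hc, d⁻¹, inv_pos.2 hd, fun v =>
    ⟨lower P rfl v, (le_inv_mul_iff₀ hd).2 (upper P rfl v)⟩⟩

lemma exists_lyapunovForm_le_neg_mul (hS : IsCompact S)
    (hneg : ∀ F ∈ S, ∀ v ≠ 0, lyapunovForm P F v < 0) :
    ∃ a > 0, ∀ F ∈ convexHull ℝ S, ∀ v, lyapunovForm P F v ≤ -a * (v ⬝ᵥ P *ᵥ v) := by
  obtain ⟨a, ha, rate⟩ := exists_pos_mul_le_of_homogeneous hS two_ne_zero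
    (p := fun v => v ⬝ᵥ P *ᵥ v) (q := fun F v => -lyapunovForm P F v) (by fun_prop)
    (by unfold Function.uncurry lyapunovForm; fun_prop) (smul_dotProduct_mulVec_smul P)
    (fun F r v => by rw [lyapunovForm, smul_dotProduct_mulVec_smul, mul_neg, lyapunovForm])
    (fun F hF v hv => neg_pos.2 (hneg F hF v hv))
  refine ⟨a, ha, fun F hF v => lyapunovForm_le_of_mem_convexHull (fun G hG => ?_) hF⟩
  linarith [rate G hG v]

theorem uniform_exponential_stability_of_lyapunovForm_neg (hP : ∀ v ≠ 0, 0 < v ⬝ᵥ P *ᵥ v)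
    (hS : IsCompact S) (hneg : ∀ F ∈ S, ∀ v ≠ 0, lyapunovForm P F v < 0) :
    ∃ C > 0, ∃ a > 0, ∀ (F : ℝ → Matrix ι ι ℝ) (x : ℝ → ι → ℝ) (t₀ : ℝ),
      (∀ t, t₀ ≤ t → F t ∈ convexHull ℝ S) →
      (∀ t, t₀ ≤ t → HasDerivWithinAt x (F t *ᵥ x t) (Ici t₀) t) →
      ∀ t, t₀ ≤ t → ‖x t‖ ≤ C * Real.exp (-a * (t - t₀)) * ‖x t₀‖ := by
  obtain ⟨c, hc, C, hC, comparison⟩ := exists_norm_sq_le_dotProduct_mulVec_le hP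
  obtain ⟨a, ha, rate⟩ := exists_lyapunovForm_le_neg_mul hS hneg
  refine ⟨√(C / c), by positivity, a / 2, by positivity, fun F x t₀ hF hx t ht => ?_⟩
  have decay : x t ⬝ᵥ P *ᵥ x t ≤ (x t₀ ⬝ᵥ P *ᵥ x t₀) * Real.exp (-a * (t - t₀)) :=
    le_mul_exp_of_hasDerivWithinAt_le (fun s hs => hasDerivWithinAt_dotProduct_mulVec (hx s hs))
      (fun s hs => rate (F s) (hF s hs) (x s)) ht
  have exp_sq : Real.exp (-(a / 2) * (t - t₀)) ^ 2 = Real.exp (-a * (t - t₀)) := by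
    rw [← Real.exp_nat_mul]
    ring_nf
  refine le_of_pow_le_pow_left₀ two_ne_zero (by positivity) ?_
  rw [mul_pow, mul_pow, Real.sq_sqrt (by positivity), exp_sq, div_mul_eq_mul_div,
    div_mul_eq_mul_div, le_div_iff₀' hc]
  calc c * ‖x t‖ ^ 2 ≤ x t ⬝ᵥ P *ᵥ x t := (comparison (x t)).1
    _ ≤ (x t₀ ⬝ᵥ P *ᵥ x t₀) * Real.exp (-a * (t - t₀)) := decay
    _ ≤ C * ‖x t₀‖ ^ 2 * Real.exp (-a * (t - t₀)) := by
      gcongr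
      exact (comparison (x t₀)).2
    _ = C * Real.exp (-a * (t - t₀)) * ‖x t₀‖ ^ 2 := by ring

lemma tendsto_zero_of_lyapunovForm_neg (hP : ∀ v ≠ 0, 0 < v ⬝ᵥ P *ᵥ v)
    (hS : IsCompact S) (hneg : ∀ F ∈ S, ∀ v ≠ 0, lyapunovForm P F v < 0)
    {F : ℝ → Matrix ι ι ℝ} {x : ℝ → ι → ℝ} {t₀ : ℝ}
    (hF : ∀ t, t₀ ≤ t → F t ∈ convexHull ℝ S)
    (hx : ∀ t, t₀ ≤ t → HasDerivWithinAt x (F t *ᵥ x t) (Ici t₀) t) :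
    Tendsto x atTop (𝓝 0) := by
  obtain ⟨C, -, a, ha, bound⟩ := uniform_exponential_stability_of_lyapunovForm_neg hP hS hneg
  have exp_tendsto : Tendsto (fun t => Real.exp (-a * (t - t₀))) atTop (𝓝 0) :=
    Real.tendsto_exp_atBot.comp <|
      (tendsto_atTop_add_const_right _ (-t₀) tendsto_id).const_mul_atTop_of_neg (neg_neg_of_pos ha)
  refine squeeze_zero_norm' ((eventually_ge_atTop t₀).mono (bound F x t₀ hF hx)) ?_
  simpa using (exp_tendsto.const_mul C).mul_const ‖x t₀‖

theorem polytopic_ltv_asymptotic_stability_general {κ : Type*} [Fintype κ] {B : Matrix ι κ ℝ}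
    {K : Matrix κ ι ℝ} (hP : ∀ v ≠ 0, 0 < v ⬝ᵥ P *ᵥ v) (hS : IsCompact S)
    (hneg : ∀ A ∈ S, ∀ v ≠ 0, lyapunovForm P (A + B * K) v < 0)
    {At : ℝ → Matrix ι ι ℝ} {x : ℝ → ι → ℝ} {t₀ : ℝ}
    (hAt : ∀ t, t₀ ≤ t → At t ∈ convexHull ℝ S)
    (hx : ∀ t, t₀ ≤ t → HasDerivWithinAt x ((At t + B * K) *ᵥ x t) (Ici t₀) t) :
    Tendsto x atTop (𝓝 0) := by
  have closedLoop_neg : ∀ F ∈ B * K +ᵥ S, ∀ v ≠ 0, lyapunovForm P F v < 0 := by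
    rintro _ ⟨A, hA, rfl⟩
    simpa only [vadd_eq_add, add_comm] using hneg A hA
  have closedLoop_mem (t : ℝ) (ht : t₀ ≤ t) :
      At t + B * K ∈ convexHull ℝ (B * K +ᵥ S) := by
    rw [convexHull_vadd, add_comm]
    exact vadd_mem_vadd_set (hAt t ht)
  exact tendsto_zero_of_lyapunovForm_neg hP (hS.vadd (B * K)) closedLoop_neg closedLoop_mem hx

end LyapunovForm

/-- Stability conclusion of the paper's Theorem 3 / Corollary 2.1(b): a common
quadratic Lyapunov function satisfying the Lyapunov matrix inequality at all
polytope vertices guarantees robust asymptotic stability of the polytopic linear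
time-varying closed-loop system `ẋ = (A(t) + BK) x`. -/
theorem polytopic_ltv_asymptotic_stability {n m N : ℕ}
    (P : Matrix (Fin n) (Fin n) ℝ) (B : Matrix (Fin n) (Fin m) ℝ)
    (K : Matrix (Fin m) (Fin n) ℝ) (A : Fin N → Matrix (Fin n) (Fin n) ℝ)
    (hPsymm : Pᵀ = P)
    (hPpos : ∀ v : Fin n → ℝ, v ≠ 0 → 0 < v ⬝ᵥ P.mulVec v)
    (hA : ∀ i : Fin N, ∀ v : Fin n → ℝ, v ≠ 0 →
      v ⬝ᵥ ((A i + B * K)ᵀ * P + P * (A i + B * K)).mulVec v < 0)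
    (At : ℝ → Matrix (Fin n) (Fin n) ℝ)
    (hAt : ∀ t : ℝ, 0 ≤ t → At t ∈ convexHull ℝ (Set.range A))
    (x : ℝ → (Fin n → ℝ))
    (hx : ∀ t : ℝ, 0 ≤ t → HasDerivAt x ((At t + B * K).mulVec (x t)) t) :
    Filter.Tendsto x Filter.atTop (nhds 0) :=
  polytopic_ltv_asymptotic_stability_general hPpos (finite_range A).isCompact
    (forall_mem_range.2 hA) hAt fun t ht => (hx t ht).hasDerivWithinAt
end

section
/- For a ∈ ℝ, let Ã(a) be the 3×3 real matrix with rows (−(25a+10), 25a+10, 0), (28−35a, 29a−1, 0), (0, 0, −(a+8)/3). Let P be a symmetric positive definite 3×3 real matrix, B a 3×m real matrix and K an m×3 real matrix such that both (Ã(0) + BK)ᵀ P + P (Ã(0) + BK) and (Ã(1) + BK)ᵀ P + P (Ã(1) + BK) are negative definite. Let α : ℝ → ℝ be an arbitrary switching signal with α(t) ∈ [0, 1] for all t, and let e : ℝ → ℝ³ satisfy, for every t ≥ 0, e′(t) = (Ã(α(t)) + BK) e(t). Then e(t) → 0 as t → +∞. -/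
open Matrix

/-!
Along an error trajectory, `V v = vᵀ P v` has derivative `vᵀ (Aᵀ P + P A) v`, where `A` is the
system matrix active at that instant. For fixed `v` this is linear in `A`, so a bound by `-k V v`
passes from the vertices to their convex hull with the same rate `k`; such a `k > 0` exists by
compactness of the set of vertices and of the unit sphere. Hence `V` decays exponentially whatever
the switching signal is, and so does the error, because `V` is comparable to the squared norm.
-/

section Homogeneous

open Set Metric

variable {X E : Type*} [TopologicalSpace X] [NormedAddCommGroup E] [NormedSpace ℝ E] [ProperSpace E]

lemma exists_pos_forall_le_mul_of_homogeneous {S : Set X} (hS : IsCompact S) {d : ℕ} (hd : d ≠ 0)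
    {f : X → E → ℝ} {g : E → ℝ} (hf : Continuous fun p : X × E => f p.1 p.2) (hg : Continuous g)
    (hf_smul : ∀ x (r : ℝ) v, f x (r • v) = r ^ d * f x v)
    (hg_smul : ∀ (r : ℝ) v, g (r • v) = r ^ d * g v)
    (hf_pos : ∀ x ∈ S, ∀ v ≠ 0, 0 < f x v) :
    ∃ C > 0, ∀ x ∈ S, ∀ v, g v ≤ C * f x v := by
  have hf_sphere : ∀ p ∈ S ×ˢ sphere (0 : E) 1, 0 < f p.1 p.2 := fun p hp =>
    hf_pos p.1 hp.1 p.2 (ne_zero_of_mem_unit_sphere ⟨p.2, hp.2⟩)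
  obtain ⟨C, hC⟩ : BddAbove ((fun p : X × E => g p.2 / f p.1 p.2) '' S ×ˢ sphere 0 1) :=
    (hS.prod (isCompact_sphere 0 1)).bddAbove_image <|
      (hg.comp continuous_snd).continuousOn.div hf.continuousOn fun p hp => (hf_sphere p hp).ne'
  refine ⟨max C 1, by positivity, fun x hx v => ?_⟩
  rcases eq_or_ne v 0 with rfl | hv
  · have hf_zero : f x 0 = 0 := by simpa [hd] using hf_smul x 0 0
    have hg_zero : g 0 = 0 := by simpa [hd] using hg_smul 0 0
    simp [hf_zero, hg_zero]
  · let u := ‖v‖⁻¹ • v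
    have hu : (x, u) ∈ S ×ˢ sphere (0 : E) 1 := ⟨hx, by simp [u, norm_smul, hv]⟩
    have hvu : v = ‖v‖ • u := by simp [u, smul_smul, hv]
    have hgu : g u ≤ max C 1 * f x u :=
      (div_le_iff₀ (hf_sphere _ hu)).mp ((hC (mem_image_of_mem _ hu)).trans (le_max_left C 1))
    rw [hvu, hg_smul, hf_smul, mul_left_comm]
    gcongr

end Homogeneous

lemma le_mul_exp_of_hasDerivWithinAt_le_s11 {V V' : ℝ → ℝ} {a k : ℝ}
    (hV : ∀ t ≥ a, HasDerivWithinAt V (V' t) (Set.Ici a) t) (hle : ∀ t ≥ a, V' t ≤ k * V t)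
    {t : ℝ} (ht : a ≤ t) : V t ≤ V a * Real.exp (k * (t - a)) := by
  rw [← gronwallBound_ε0]
  refine le_gronwallBound_of_liminf_deriv_right_le (f' := V')
    (fun s hs => (hV s hs.1).continuousWithinAt.mono Set.Icc_subset_Ici_self)
    (fun s hs r hr => ?_) le_rfl (fun s hs => by simpa using hle s hs.1) t ⟨ht, le_rfl⟩
  exact ((hV s hs.1).mono (Set.Ici_subset_Ici.mpr hs.1)).liminf_right_slope_le hr

variable {n : Type*} [Fintype n]

section Deriv

variable {𝕜 : Type*} [NontriviallyNormedField 𝕜] {s : Set 𝕜} {t : 𝕜}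

lemma hasDerivWithinAt_dotProduct {u v : 𝕜 → n → 𝕜} {u' v' : n → 𝕜}
    (hu : HasDerivWithinAt u u' s t) (hv : HasDerivWithinAt v v' s t) :
    HasDerivWithinAt (fun τ => u τ ⬝ᵥ v τ) (u' ⬝ᵥ v t + u t ⬝ᵥ v') s t := by
  simp only [dotProduct, ← Finset.sum_add_distrib]
  exact HasDerivWithinAt.fun_sum fun i _ =>
    (hasDerivWithinAt_pi.mp hu i).mul (hasDerivWithinAt_pi.mp hv i)

lemma hasDerivWithinAt_mulVec {m : Type*} [Finite m] (M : Matrix m n 𝕜) {v : 𝕜 → n → 𝕜}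
    {v' : n → 𝕜} (hv : HasDerivWithinAt v v' s t) :
    HasDerivWithinAt (fun τ => M *ᵥ v τ) (M *ᵥ v') s t := by
  have := Fintype.ofFinite m
  refine hasDerivWithinAt_pi.mpr fun i => ?_
  simpa only [zero_dotProduct, zero_add] using!
    hasDerivWithinAt_dotProduct (hasDerivWithinAt_const t s (M i)) hv

end Deriv

/-- The Lyapunov operator `A ↦ Aᵀ P + P A`: its quadratic form is the derivative of `vᵀ P v` along
the linear flow `v' = A v`. -/
def lyapunovOperator {R : Type*} [NonUnitalNonAssocSemiring R] (P A : Matrix n n R) :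
    Matrix n n R :=
  Aᵀ * P + P * A

lemma dotProduct_lyapunovOperator_mulVec {R : Type*} [CommSemiring R] (P A : Matrix n n R)
    (v : n → R) :
    v ⬝ᵥ lyapunovOperator P A *ᵥ v = (A *ᵥ v) ⬝ᵥ (P *ᵥ v) + v ⬝ᵥ P *ᵥ (A *ᵥ v) := by
  rw [lyapunovOperator, add_mulVec, dotProduct_add, ← mulVec_mulVec, ← mulVec_mulVec,
    dotProduct_mulVec v Aᵀ, vecMul_transpose]

lemma hasDerivWithinAt_dotProduct_mulVec_self {𝕜 : Type*} [NontriviallyNormedField 𝕜]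
    (P A : Matrix n n 𝕜) {e : 𝕜 → n → 𝕜} {s : Set 𝕜} {t : 𝕜}
    (he : HasDerivWithinAt e (A *ᵥ e t) s t) :
    HasDerivWithinAt (fun τ => e τ ⬝ᵥ P *ᵥ e τ) (e t ⬝ᵥ lyapunovOperator P A *ᵥ e t) s t := by
  rw [dotProduct_lyapunovOperator_mulVec]
  exact hasDerivWithinAt_dotProduct he (hasDerivWithinAt_mulVec P he)

lemma dotProduct_mulVec_smul_self {R : Type*} [CommSemiring R] (M : Matrix n n R) (r : R)
    (v : n → R) : (r • v) ⬝ᵥ M *ᵥ (r • v) = r ^ 2 * (v ⬝ᵥ M *ᵥ v) := by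
  simp only [mulVec_smul, smul_dotProduct, dotProduct_smul, smul_eq_mul]
  ring

lemma convex_setOf_dotProduct_lyapunovOperator_le (P : Matrix n n ℝ) (b : (n → ℝ) → ℝ) :
    Convex ℝ {A | ∀ v, v ⬝ᵥ lyapunovOperator P A *ᵥ v ≤ b v} := by
  rw [Set.ofPred_forall]
  refine convex_iInter fun v => convex_halfSpace_le ⟨fun A A' => ?_, fun c A => ?_⟩ (b v)
  · simp only [dotProduct_lyapunovOperator_mulVec, add_mulVec, mulVec_add, add_dotProduct,
      dotProduct_add]
    ring
  · simp only [dotProduct_lyapunovOperator_mulVec, smul_mulVec, mulVec_smul, smul_dotProduct,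
      dotProduct_smul, smul_add]

variable {P : Matrix n n ℝ} {S : Set (Matrix n n ℝ)}

lemma exists_pos_forall_mem_convexHull_dotProduct_lyapunovOperator_le (hS : IsCompact S)
    (hneg : ∀ A ∈ S, ∀ v ≠ 0, v ⬝ᵥ lyapunovOperator P A *ᵥ v < 0) :
    ∃ k > 0, ∀ A ∈ convexHull ℝ S, ∀ v,
      v ⬝ᵥ lyapunovOperator P A *ᵥ v ≤ -k * (v ⬝ᵥ P *ᵥ v) := by
  obtain ⟨C, hC, hPC⟩ := exists_pos_forall_le_mul_of_homogeneous hS two_ne_zero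
    (f := fun A v => -(v ⬝ᵥ lyapunovOperator P A *ᵥ v)) (g := fun v => v ⬝ᵥ P *ᵥ v)
    (by unfold lyapunovOperator; fun_prop) (by fun_prop)
    (fun A r v => by rw [dotProduct_mulVec_smul_self, mul_neg])
    (dotProduct_mulVec_smul_self P) (fun A hA v hv => neg_pos.mpr (hneg A hA v hv))
  refine ⟨C⁻¹, inv_pos.mpr hC, fun A hA => ?_⟩
  refine convexHull_min (fun A' hA' v => ?_)
    (convex_setOf_dotProduct_lyapunovOperator_le P fun v => -C⁻¹ * (v ⬝ᵥ P *ᵥ v)) hA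
  have := (inv_mul_le_iff₀ hC).mpr (hPC A' hA' v)
  linarith

lemma exists_sq_norm_le_and_dotProduct_mulVec_le (hP : ∀ v ≠ 0, 0 < v ⬝ᵥ P *ᵥ v) :
    ∃ c > 0, ∃ C > 0, ∀ v, ‖v‖ ^ 2 ≤ c * (v ⬝ᵥ P *ᵥ v) ∧ v ⬝ᵥ P *ᵥ v ≤ C * ‖v‖ ^ 2 := by
  have norm_sq_smul : ∀ (r : ℝ) (v : n → ℝ), ‖r • v‖ ^ 2 = r ^ 2 * ‖v‖ ^ 2 := fun r v => by
    rw [norm_smul, mul_pow, Real.norm_eq_abs, sq_abs]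
  obtain ⟨c, hc, hlower⟩ := exists_pos_forall_le_mul_of_homogeneous
    (isCompact_singleton (x := ())) two_ne_zero (f := fun _ v => v ⬝ᵥ P *ᵥ v)
    (g := fun v => ‖v‖ ^ 2) (by fun_prop) (by fun_prop)
    (fun _ => dotProduct_mulVec_smul_self P) norm_sq_smul (fun _ _ => hP)
  obtain ⟨C, hC, hupper⟩ := exists_pos_forall_le_mul_of_homogeneous
    (isCompact_singleton (x := ())) two_ne_zero (f := fun _ (v : n → ℝ) => ‖v‖ ^ 2)
    (g := fun v => v ⬝ᵥ P *ᵥ v) (by fun_prop) (by fun_prop)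
    (fun _ => norm_sq_smul) (dotProduct_mulVec_smul_self P) (fun _ _ v hv => by positivity)
  exact ⟨c, hc, C, hC, fun v => ⟨hlower () rfl v, hupper () rfl v⟩⟩

theorem exists_forall_sq_norm_le_mul_exp_of_lyapunovOperator_neg
    (hP : ∀ v ≠ 0, 0 < v ⬝ᵥ P *ᵥ v) (hS : IsCompact S)
    (hneg : ∀ A ∈ S, ∀ v ≠ 0, v ⬝ᵥ lyapunovOperator P A *ᵥ v < 0) :
    ∃ C > 0, ∃ k > 0, ∀ (A : ℝ → Matrix n n ℝ) (e : ℝ → n → ℝ),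
      (∀ t ≥ 0, A t ∈ convexHull ℝ S) →
      (∀ t ≥ 0, HasDerivWithinAt e (A t *ᵥ e t) (Set.Ici 0) t) →
      ∀ t ≥ 0, ‖e t‖ ^ 2 ≤ C * ‖e 0‖ ^ 2 * Real.exp (-k * t) := by
  obtain ⟨k, hk, hrate⟩ := exists_pos_forall_mem_convexHull_dotProduct_lyapunovOperator_le hS hneg
  obtain ⟨c, hc, C, hC, hbounds⟩ := exists_sq_norm_le_and_dotProduct_mulVec_le hP
  refine ⟨c * C, by positivity, k, hk, fun A e hA he t ht => ?_⟩
  have hdecay : e t ⬝ᵥ P *ᵥ e t ≤ (e 0 ⬝ᵥ P *ᵥ e 0) * Real.exp (-k * t) := by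
    simpa using le_mul_exp_of_hasDerivWithinAt_le_s11
      (fun s hs => hasDerivWithinAt_dotProduct_mulVec_self P (A s) (he s hs))
      (fun s hs => hrate (A s) (hA s hs) (e s)) ht
  calc ‖e t‖ ^ 2
      ≤ c * (e t ⬝ᵥ P *ᵥ e t) := (hbounds (e t)).1
    _ ≤ c * ((e 0 ⬝ᵥ P *ᵥ e 0) * Real.exp (-k * t)) := by gcongr
    _ ≤ c * (C * ‖e 0‖ ^ 2 * Real.exp (-k * t)) := by gcongr; exact (hbounds (e 0)).2
    _ = c * C * ‖e 0‖ ^ 2 * Real.exp (-k * t) := by ring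

lemma tendsto_zero_of_sq_norm_le_mul_exp {E : Type*} [SeminormedAddCommGroup E] {e : ℝ → E}
    {C k : ℝ} (hk : 0 < k) (he : ∀ t ≥ 0, ‖e t‖ ^ 2 ≤ C * Real.exp (-k * t)) :
    Filter.Tendsto e Filter.atTop (nhds 0) := by
  have hexp : Filter.Tendsto (fun t => C * Real.exp (-k * t)) Filter.atTop (nhds 0) := by
    simpa using (Real.tendsto_exp_comp_nhds_zero.mpr
      (Filter.tendsto_id.const_mul_atTop_of_neg (neg_neg_of_pos hk))).const_mul C
  have hsq : Filter.Tendsto (fun t => ‖e t‖ ^ 2) Filter.atTop (nhds 0) :=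
    squeeze_zero' (.of_forall fun t => sq_nonneg _)
      (Filter.eventually_atTop.mpr ⟨0, he⟩) hexp
  exact tendsto_zero_iff_norm_tendsto_zero.mpr (by simpa using hsq.sqrt)

theorem unified_chaotic_switched_synchronization_general
    (hP : ∀ v ≠ 0, 0 < v ⬝ᵥ P *ᵥ v) (hS : IsCompact S)
    (hneg : ∀ A ∈ S, ∀ v ≠ 0, v ⬝ᵥ lyapunovOperator P A *ᵥ v < 0)
    {A : ℝ → Matrix n n ℝ} (hA : ∀ t ≥ 0, A t ∈ convexHull ℝ S)
    {e : ℝ → n → ℝ} (he : ∀ t ≥ 0, HasDerivWithinAt e (A t *ᵥ e t) (Set.Ici 0) t) :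
    Filter.Tendsto e Filter.atTop (nhds 0) := by
  obtain ⟨C, -, k, hk, hbound⟩ :=
    exists_forall_sq_norm_le_mul_exp_of_lyapunovOperator_neg hP hS hneg
  exact tendsto_zero_of_sq_norm_le_mul_exp hk (hbound A e hA he)

/-- The matrix `Ã(a)` of the linear error dynamics of the unified chaotic system, without the
feedback term `B K`. -/
noncomputable def unifiedErrorMatrix (a : ℝ) : Matrix (Fin 3) (Fin 3) ℝ :=
  !![-(25 * a + 10), 25 * a + 10, 0;
     28 - 35 * a, 29 * a - 1, 0;
     0, 0, -((a + 8) / 3)]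

lemma unifiedErrorMatrix_eq_lineMap (a : ℝ) :
    unifiedErrorMatrix a =
      AffineMap.lineMap (unifiedErrorMatrix 0) (unifiedErrorMatrix 1) a := by
  rw [AffineMap.lineMap_apply_module]
  ext i j
  fin_cases i <;> fin_cases j <;> simp [unifiedErrorMatrix] <;> ring

lemma unifiedErrorMatrix_add_mem_convexHull {a : ℝ} (ha : a ∈ Set.Icc 0 1)
    (N : Matrix (Fin 3) (Fin 3) ℝ) :
    unifiedErrorMatrix a + N ∈
      convexHull ℝ {unifiedErrorMatrix 0 + N, unifiedErrorMatrix 1 + N} := by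
  simp only [convexHull_pair, add_comm _ N, mem_segment_translate,
    unifiedErrorMatrix_eq_lineMap a]
  exact lineMap_mem_segment ℝ _ _ ha

/-- The paper's main guaranteed-synchronization result: a single feedback gain `K`
certified by the Lyapunov matrix inequalities at the two polytope vertices `Ã(0)`
and `Ã(1)` drives the synchronization error of the switched unified chaotic system
to zero under arbitrary switching of the key parameter `α(t) ∈ [0,1]`. -/
theorem unified_chaotic_switched_synchronization {m : ℕ}
    (Atil : ℝ → Matrix (Fin 3) (Fin 3) ℝ)
    (hAtil : ∀ a : ℝ, Atil a =
      !![-(25 * a + 10), 25 * a + 10, 0;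
         28 - 35 * a, 29 * a - 1, 0;
         0, 0, -((a + 8) / 3)])
    (P : Matrix (Fin 3) (Fin 3) ℝ)
    (hPsymm : Pᵀ = P)
    (hPpos : ∀ v : Fin 3 → ℝ, v ≠ 0 → 0 < v ⬝ᵥ P.mulVec v)
    (B : Matrix (Fin 3) (Fin m) ℝ) (K : Matrix (Fin m) (Fin 3) ℝ)
    (h0 : ∀ v : Fin 3 → ℝ, v ≠ 0 →
      v ⬝ᵥ ((Atil 0 + B * K)ᵀ * P + P * (Atil 0 + B * K)).mulVec v < 0)
    (h1 : ∀ v : Fin 3 → ℝ, v ≠ 0 →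
      v ⬝ᵥ ((Atil 1 + B * K)ᵀ * P + P * (Atil 1 + B * K)).mulVec v < 0)
    (α : ℝ → ℝ) (hα : ∀ t : ℝ, α t ∈ Set.Icc (0 : ℝ) 1)
    (e : ℝ → (Fin 3 → ℝ))
    (he : ∀ t : ℝ, 0 ≤ t →
      HasDerivAt e ((Atil (α t) + B * K).mulVec (e t)) t) :
    Filter.Tendsto e Filter.atTop (nhds 0) := by
  obtain rfl : Atil = unifiedErrorMatrix := funext hAtil
  exact unified_chaotic_switched_synchronization_general hPpos (Set.toFinite _).isCompact
    (by rintro A (rfl | rfl); exacts [h0, h1])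
    (fun t _ => unifiedErrorMatrix_add_mem_convexHull (hα t) (B * K))
    fun t ht => (he t ht).hasDerivWithinAt
end
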